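/- Fix s₀ > d/2 and let f, g ∈ H^s(𝕋^d;ℂ) with s ≥ s₀. Then fg = T_f g + T_g f + ℛ(f,g), where the remainder has Fourier coefficients ℛ(f,g)^(ξ) = (2π)^{-d} Σ_{η∈ℤ^d} a(ξ−η,η) f̂(ξ−η) ĝ(η) with, for every ρ ≥ 0, |a(v,w)| ≤ C_ρ (1+min(|v|,|w|))^ρ / (1+max(|v|,|w|))^ρ; moreover for every 0 ≤ ρ ≤ s − s₀: ‖ℛ(f,g)‖_{H^{s+ρ}} ≤ C ‖f‖_{H^s} ‖g‖_{H^s}. -/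

import Mathlib

open MeasureTheory Complex Real Filter

noncomputable section

namespace QLNLS

/-- Points of `ℝ^d` (resp. the torus `𝕋^d = (ℝ/2πℤ)^d`, via `2π`-periodic functions). -/
abbrev Vec (d : ℕ) := Fin d → ℝ
/-- Frequency lattice `ℤ^d`. -/
abbrev Zd (d : ℕ) := Fin d → ℤ
/-- Functions on the torus. -/
abbrev Fn (d : ℕ) := Vec d → ℂ
/-- Sequences of Fourier coefficients. -/
abbrev Seq (d : ℕ) := Zd d → ℂ
/-- Symbols `a(x, ξ)`. -/
abbrev Sym (d : ℕ) := Vec d → Vec d → ℂ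

variable {d : ℕ}

/-- Euclidean norm `|ξ|`. -/
def rnorm (ξ : Vec d) : ℝ := Real.sqrt (∑ i, (ξ i) ^ 2)

/-- Euclidean norm `|n|` of a lattice point. -/
def znorm (n : Zd d) : ℝ := Real.sqrt (∑ i, ((n i : ℝ)) ^ 2)

/-- Japanese bracket `⟨n⟩ = (1+|n|²)^{1/2}`. -/
def jb (n : Zd d) : ℝ := Real.sqrt (1 + ∑ i, ((n i : ℝ)) ^ 2)

/-- Japanese bracket `⟨ξ⟩` for real frequencies. -/
def jbR (ξ : Vec d) : ℝ := Real.sqrt (1 + ∑ i, (ξ i) ^ 2)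

/-- `2π`-periodicity in every coordinate. -/
def Periodic2pi (u : Fn d) : Prop :=
  ∀ (x : Vec d) (n : Zd d), u (fun i => x i + 2 * π * (n i : ℝ)) = u x

/-- A fundamental domain of the torus. -/
def box (d : ℕ) : Set (Vec d) := Set.univ.pi fun _ : Fin d => Set.Ioc (0 : ℝ) (2 * π)

/-- Fourier coefficient `û(n) = (2π)^{-d/2} ∫ u(x) e^{-i n·x} dx`. -/
def fCoeff (u : Fn d) (n : Zd d) : ℂ :=
  (((2 * π : ℝ) ^ (-(d : ℝ) / 2) : ℝ) : ℂ) *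
    ∫ x in box d, u x * Complex.exp (-Complex.I * ((∑ i, (n i : ℝ) * x i : ℝ) : ℂ))

/-- Squared Sobolev norm of a coefficient sequence. -/
def hsNormSq (s : ℝ) (c : Seq d) : ℝ := ∑' n : Zd d, jb n ^ (2 * s) * ‖c n‖ ^ 2

/-- Sobolev norm of a coefficient sequence. -/
def hsNorm (s : ℝ) (c : Seq d) : ℝ := Real.sqrt (hsNormSq s c)

/-- Membership of a coefficient sequence in `H^s`. -/
def InHsSeq (s : ℝ) (c : Seq d) : Prop :=
  Summable fun n : Zd d => jb n ^ (2 * s) * ‖c n‖ ^ 2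

/-- `H^s` norm of a function on the torus. -/
def sobNorm (s : ℝ) (u : Fn d) : ℝ := hsNorm s (fCoeff u)

/-- `u ∈ H^s(𝕋^d;ℂ)`: `u` is `2π`-periodic, its Fourier coefficients are `H^s`-summable,
and `u` is represented by its Fourier series. -/
def InHs (s : ℝ) (u : Fn d) : Prop :=
  Periodic2pi u ∧ InHsSeq s (fCoeff u) ∧
    ∀ x : Vec d, HasSum
      (fun n : Zd d => (((2 * π : ℝ) ^ (-(d : ℝ) / 2) : ℝ) : ℂ) * fCoeff u n *
        Complex.exp (Complex.I * ((∑ i, (n i : ℝ) * x i : ℝ) : ℂ))) (u x)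

/-- Partial derivative `∂_{x_i}` of a function. -/
def pdF (i : Fin d) (u : Fn d) : Fn d := fun x => fderiv ℝ u x (Pi.single i 1)

/-- Partial derivative `∂_{x_i}` of a symbol. -/
def pdx (i : Fin d) (a : Sym d) : Sym d := fun x ξ => fderiv ℝ (fun y => a y ξ) x (Pi.single i 1)

/-- Partial derivative `∂_{ξ_i}` of a symbol. -/
def pdxi (i : Fin d) (a : Sym d) : Sym d := fun x ξ => fderiv ℝ (fun η => a x η) ξ (Pi.single i 1)

/-- Iterated mixed partial derivative of a symbol along a list of directions
(`Sum.inl j` = `∂_{x_j}`, `Sum.inr j` = `∂_{ξ_j}`). -/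
def mderiv (L : List (Fin d ⊕ Fin d)) (a : Sym d) : Sym d :=
  L.foldr (fun i b => match i with | Sum.inl j => pdx j b | Sum.inr j => pdxi j b) a

/-- Number of `ξ`-derivatives in a list of directions. -/
def nXi (L : List (Fin d ⊕ Fin d)) : ℕ := (L.filter fun i => i.isRight).length

/-- The set of values whose supremum is the symbol seminorm `|a|_{𝒩^m_s}`. -/
def symVals (m : ℝ) (s : ℕ) (a : Sym d) : Set ℝ :=
  { r | ∃ (L : List (Fin d ⊕ Fin d)) (x ξ : Vec d), L.length ≤ s ∧
        r = jbR ξ ^ (-m + (nXi L : ℝ)) * ‖mderiv L a x ξ‖ }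

/-- Symbol seminorm `|a|_{𝒩^m_s}`. -/
def symNorm (m : ℝ) (s : ℕ) (a : Sym d) : ℝ := sSup (symVals m s a)

/-- Membership in the symbol class `𝒩^m_s`. -/
def InSymClass (m : ℝ) (s : ℕ) (a : Sym d) : Prop :=
  ContDiff ℝ (s : ℕ∞) (Function.uncurry a) ∧ (∀ ξ, Periodic2pi fun x => a x ξ) ∧
    BddAbove (symVals m s a)

/-- Poisson bracket `{a,b}`. -/
def poisson (a b : Sym d) : Sym d := fun x ξ =>
  ∑ j, (pdxi j a x ξ * pdx j b x ξ - pdx j a x ξ * pdxi j b x ξ)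

/-- The second-order bracket `σ(a,b)`. -/
def sigmaB (a b : Sym d) : Sym d := fun x ξ =>
  ∑ j, ∑ k,
    (pdxi j (pdxi k a) x ξ * pdx j (pdx k b) x ξ
      - 2 * pdx j (pdxi k a) x ξ * pdxi j (pdx k b) x ξ
      + pdx j (pdx k a) x ξ * pdxi j (pdxi k b) x ξ)

/-- An admissible cut-off function `χ`. -/
structure IsCutoff (χ : ℝ → ℝ) : Prop where
  smooth : ContDiff ℝ (⊤ : ℕ∞) χ
  mem : ∀ t : ℝ, χ t ∈ Set.Icc (0 : ℝ) 1
  eq_one : ∀ t : ℝ, |t| ≤ 5 / 4 → χ t = 1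
  eq_zero : ∀ t : ℝ, 8 / 5 ≤ |t| → χ t = 0

/-- `x`-Fourier coefficient `â(η, ξ)` of a symbol. -/
def symCoeff (a : Sym d) (η : Zd d) (ξ : Vec d) : ℂ := fCoeff (fun x => a x ξ) η

/-- Midpoint `(j+k)/2` of two lattice points. -/
def mid (j k : Zd d) : Vec d := fun i => ((j i + k i : ℤ) : ℝ) / 2

/-- The paradifferential cut-off factor `χ_ε(|j-k|/⟨j+k⟩) = χ(|j-k|/(ε⟨j+k⟩))`. -/
def cutFactor (χ : ℝ → ℝ) (ε : ℝ) (j k : Zd d) : ℝ :=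
  χ (znorm (j - k) / (ε * jb (j + k)))

/-- The Weyl paradifferential operator `T_a`, acting on Fourier coefficient sequences:
`(T_a h)^(j) = (2π)^{-d/2} Σ_k χ_ε(|j-k|/⟨j+k⟩) â(j-k,(j+k)/2) ĥ(k)`. -/
def paraC (χ : ℝ → ℝ) (ε : ℝ) (a : Sym d) (c : Seq d) : Seq d := fun j =>
  (((2 * π : ℝ) ^ (-(d : ℝ) / 2) : ℝ) : ℂ) *
    ∑' k : Zd d, ((cutFactor χ ε j k : ℝ) : ℂ) * symCoeff a (j - k) (mid j k) * c k

/-- The operator `R_a` built from the difference of two cut-offs. -/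
def remC (χ : ℝ → ℝ) (ε₁ ε₂ : ℝ) (a : Sym d) (c : Seq d) : Seq d := fun j =>
  (((2 * π : ℝ) ^ (-(d : ℝ) / 2) : ℝ) : ℂ) *
    ∑' k : Zd d, ((cutFactor χ ε₁ j k - cutFactor χ ε₂ j k : ℝ) : ℂ) *
      symCoeff a (j - k) (mid j k) * c k

/-- Wirtinger derivative `∂_{y_j} = (∂_{Re y_j} - i ∂_{Im y_j})/2`. -/
def wdP {n : ℕ} (j : Fin n) (G : (Fin n → ℂ) → ℂ) : (Fin n → ℂ) → ℂ := fun y =>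
  (fderiv ℝ G y (Pi.single j 1) - Complex.I * fderiv ℝ G y (Pi.single j Complex.I)) / 2

/-- Wirtinger derivative `∂_{ȳ_j} = (∂_{Re y_j} + i ∂_{Im y_j})/2`. -/
def wdM {n : ℕ} (j : Fin n) (G : (Fin n → ℂ) → ℂ) : (Fin n → ℂ) → ℂ := fun y =>
  (fderiv ℝ G y (Pi.single j 1) + Complex.I * fderiv ℝ G y (Pi.single j Complex.I)) / 2

/-- The 1-jet `(u, ∇u)` of a function, as a point of `ℂ^{d+1}`. -/
def jet (u : Fn d) (x : Vec d) : Fin (d + 1) → ℂ :=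
  Fin.cons (u x) fun j => pdF j u x

/-- The Hamiltonian nonlinearity
`P(u) = (∂_{ū}F)(u,∇u) - Σ_j ∂_{x_j}((∂_{ū_{x_j}}F)(u,∇u))`. -/
def Pop (F : (Fin (d + 1) → ℂ) → ℂ) (u : Fn d) : Fn d := fun x =>
  wdM 0 F (jet u x) - ∑ j, pdF j (fun y => wdM (Fin.succ j) F (jet u y)) x

/-- `F ∈ C^∞(ℂ^{d+1};ℝ)` in the real sense, with a zero of order at least 3 at the origin. -/
def GoodF (d : ℕ) (F : (Fin (d + 1) → ℂ) → ℂ) : Prop :=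
  ContDiff ℝ (⊤ : ℕ∞) F ∧ (∀ y, (F y).im = 0) ∧ ∀ k : ℕ, k ≤ 2 → iteratedFDeriv ℝ k F 0 = 0

/-- Global ellipticity (Hypothesis 1.1). -/
def Elliptic (d : ℕ) (F : (Fin (d + 1) → ℂ) → ℂ) : Prop :=
  ∃ c₁ > (0 : ℝ), ∃ c₂ > (0 : ℝ), ∀ (ξ : Vec d) (y : Fin (d + 1) → ℂ),
    (c₁ * ∑ i, (ξ i) ^ 2 ≤
      (∑ j, ∑ k, ((ξ j * ξ k : ℝ) : ℂ) *
        ((if j = k then 1 else 0) + wdP (Fin.succ j) (wdM (Fin.succ k) F) y)).re) ∧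
    (ξ ≠ 0 → c₂ ≤
      (1 + (∑ j, ∑ k, ((ξ j * ξ k : ℝ) : ℂ) * wdP (Fin.succ j) (wdM (Fin.succ k) F) y).re
            / ∑ i, (ξ i) ^ 2) ^ 2
        - ‖∑ j, ∑ k, ((ξ j * ξ k : ℝ) : ℂ) * wdM (Fin.succ j) (wdM (Fin.succ k) F) y‖ ^ 2
            / (∑ i, (ξ i) ^ 2) ^ 2)

/-- The symbol `a₂(x,ξ) = Σ_{j,k} (∂_{ū_{x_k}}∂_{u_{x_j}}F)(u,∇u) ξ_j ξ_k`. -/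
def a2sym (F : (Fin (d + 1) → ℂ) → ℂ) (u : Fn d) : Sym d := fun x ξ =>
  ∑ j, ∑ k, ((ξ j * ξ k : ℝ) : ℂ) * wdP (Fin.succ j) (wdM (Fin.succ k) F) (jet u x)

/-- The symbol `b₂(x,ξ) = Σ_{j,k} (∂_{ū_{x_k}}∂_{ū_{x_j}}F)(u,∇u) ξ_j ξ_k`. -/
def b2sym (F : (Fin (d + 1) → ℂ) → ℂ) (u : Fn d) : Sym d := fun x ξ =>
  ∑ j, ∑ k, ((ξ j * ξ k : ℝ) : ℂ) * wdM (Fin.succ j) (wdM (Fin.succ k) F) (jet u x)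

/-- The symbol `a₁(x,ξ) = (i/2) Σ_j ((∂_{ū}∂_{u_{x_j}}F) - (∂_u∂_{ū_{x_j}}F))(u,∇u) ξ_j`. -/
def a1sym (F : (Fin (d + 1) → ℂ) → ℂ) (u : Fn d) : Sym d := fun x ξ =>
  Complex.I / 2 * ∑ j, ((ξ j : ℝ) : ℂ) *
    (wdM 0 (wdP (Fin.succ j) F) (jet u x) - wdP 0 (wdM (Fin.succ j) F) (jet u x))

/-- Conjugation of a coefficient sequence: the sequence of `conj u`. -/
def starSeq (c : Seq d) : Seq d := fun n => (starRingEnd ℂ) (c (-n))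

/-- Pointwise conjugate of a function. -/
def starF (u : Fn d) : Fn d := fun x => (starRingEnd ℂ) (u x)

/-- Pointwise conjugate of a symbol. -/
def starSym (a : Sym d) : Sym d := fun x ξ => (starRingEnd ℂ) (a x ξ)

/-- The symbol `(x,ξ) ↦ conj (a(x,-ξ))`. -/
def flipSym (a : Sym d) : Sym d := fun x ξ => (starRingEnd ℂ) (a x (-ξ))

/-- The matrix `E = diag(1,-1)` as a sign vector. -/
def Em : Fin 2 → ℂ := ![1, -1]

/-- `Op^BW` of a 2×2 matrix of symbols, acting on vectors of coefficient sequences. -/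
def opBWmat (χ : ℝ → ℝ) (ε : ℝ) (A : Fin 2 → Fin 2 → Sym d) (C : Fin 2 → Seq d) :
    Fin 2 → Seq d := fun σ j => ∑ τ, paraC χ ε (A σ τ) (C τ) j

/-- The symbol `|ξ|²`. -/
def sq2sym (d : ℕ) : Sym d := fun _ ξ => (((rnorm ξ) ^ 2 : ℝ) : ℂ)

/-- The matrix of symbols `A₂(x,ξ)`. -/
def A2mat (F : (Fin (d + 1) → ℂ) → ℂ) (u : Fn d) : Fin 2 → Fin 2 → Sym d :=
  ![![a2sym F u, b2sym F u], ![flipSym (b2sym F u), a2sym F u]]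

/-- The matrix of symbols `A₁(x,ξ)`. -/
def A1mat (F : (Fin (d + 1) → ℂ) → ℂ) (u : Fn d) : Fin 2 → Fin 2 → Sym d :=
  ![![a1sym F u, 0], ![0, flipSym (a1sym F u)]]

/-- The full matrix of symbols `|ξ|²𝟙 + A₂(x,ξ) + A₁(x,ξ)`. -/
def sysSym (F : (Fin (d + 1) → ℂ) → ℂ) (u : Fn d) : Fin 2 → Fin 2 → Sym d := fun σ τ =>
  fun x ξ => (if σ = τ then sq2sym d x ξ else 0) + A2mat F u σ τ x ξ + A1mat F u σ τ x ξ

/-- `H^s` norm of a vector of coefficient sequences. -/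
def hsNormVec (s : ℝ) (C : Fin 2 → Seq d) : ℝ := hsNorm s (C 0) + hsNorm s (C 1)

/-- Membership of a vector of coefficient sequences in `H^s`. -/
def InHsVec (s : ℝ) (C : Fin 2 → Seq d) : Prop := InHsSeq s (C 0) ∧ InHsSeq s (C 1)

/-- The `L²` pairing `(U,V) = ∫ (u v̄ + ū v)`, at the level of Fourier coefficients. -/
def pairL2 (C E : Fin 2 → Seq d) : ℂ :=
  ∑' n : Zd d, (C 0 n * (starRingEnd ℂ) (E 0 n) + C 1 n * (starRingEnd ℂ) (E 1 n))

/-- The scalar `L²` pairing, at the level of Fourier coefficients. -/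
def pairS (c e : Seq d) : ℂ := ∑' n : Zd d, c n * (starRingEnd ℂ) (e n)

/-- A matrix of operators is real-to-real: it preserves the subspace `𝒰 = {(u, ū)}`. -/
def PreservesReality (M : (Fin 2 → Seq d) → (Fin 2 → Seq d)) : Prop :=
  ∀ c : Seq d, M ![c, starSeq c] 1 = starSeq (M ![c, starSeq c] 0)

/-- The coefficient vector of `(v(t), conj v(t))`. -/
def Vvec (v : ℝ → Fn d) (t : ℝ) : Fin 2 → Seq d :=
  ![fCoeff (v t), starSeq (fCoeff (v t))]

/-- `V = (v, v̄)` solves `V̇ = iE Op^BW(|ξ|²𝟙 + A₂ + A₁)V` on `[0,T)`. -/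
def SolvesLin (χ : ℝ → ℝ) (ε : ℝ) (F : (Fin (d + 1) → ℂ) → ℂ) (T : ℝ)
    (u v : ℝ → Fn d) : Prop :=
  ∀ᵐ t ∂(volume.restrict (Set.Ico (0 : ℝ) T)), ∀ (σ : Fin 2) (n : Zd d),
    HasDerivAt (fun τ => Vvec v τ σ n)
      (Complex.I * Em σ * opBWmat χ ε (sysSym F (u t)) (Vvec v t) σ n) t

/-- The regularity hypothesis (4.1):
`u ∈ L^∞([0,T);H^s) ∩ Lip([0,T);H^{s-2})`, with
`sup_t ‖u(t)‖_{H^{2s₀+7}} ≤ r` and `‖∂_t u‖_{H^{2s₀+5}} ≤ r` (as a Lipschitz bound). -/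
def RegHyp (s₀ : ℕ) (s T r : ℝ) (u : ℝ → Fn d) : Prop :=
  (∀ t ∈ Set.Ico (0 : ℝ) T, InHs s (u t)) ∧
  (∃ M : ℝ, ∀ t ∈ Set.Ico (0 : ℝ) T, sobNorm s (u t) ≤ M) ∧
  (∃ L : ℝ, ∀ t₁ ∈ Set.Ico (0 : ℝ) T, ∀ t₂ ∈ Set.Ico (0 : ℝ) T,
    sobNorm (s - 2) (u t₁ - u t₂) ≤ L * |t₁ - t₂|) ∧
  (∀ t ∈ Set.Ico (0 : ℝ) T, sobNorm (2 * (s₀ : ℝ) + 7) (u t) ≤ r) ∧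
  (∀ t₁ ∈ Set.Ico (0 : ℝ) T, ∀ t₂ ∈ Set.Ico (0 : ℝ) T,
    sobNorm (2 * (s₀ : ℝ) + 5) (u t₁ - u t₂) ≤ r * |t₁ - t₂|)

/-- `v ∈ L^∞([0,T);H^s) ∩ Lip([0,T);H^{s-2})`. -/
def RegSol (s T : ℝ) (v : ℝ → Fn d) : Prop :=
  (∀ t ∈ Set.Ico (0 : ℝ) T, InHs s (v t)) ∧
  (∃ M : ℝ, ∀ t ∈ Set.Ico (0 : ℝ) T, sobNorm s (v t) ≤ M) ∧
  (∃ L : ℝ, ∀ t₁ ∈ Set.Ico (0 : ℝ) T, ∀ t₂ ∈ Set.Ico (0 : ℝ) T,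
    sobNorm (s - 2) (v t₁ - v t₂) ≤ L * |t₁ - t₂|)

/-- The high-frequency cut-off `𝒳_R(ξ) = 1 - χ(|ξ|/R)`. -/
def cutXR (χ : ℝ → ℝ) (R : ℝ) (ξ : Vec d) : ℝ := 1 - χ (rnorm ξ / R)

/-- `ã_{2,R}(x,ξ) = |ξ|^{-2} a₂(x,ξ) 𝒳_R(ξ)`. -/
def a2til (F : (Fin (d + 1) → ℂ) → ℂ) (u : Fn d) (χ : ℝ → ℝ) (R : ℝ) : Sym d := fun x ξ =>
  ((((rnorm ξ) ^ 2)⁻¹ * cutXR χ R ξ : ℝ) : ℂ) * a2sym F u x ξ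

/-- `b̃_{2,R}(x,ξ) = |ξ|^{-2} b₂(x,ξ) 𝒳_R(ξ)`. -/
def b2til (F : (Fin (d + 1) → ℂ) → ℂ) (u : Fn d) (χ : ℝ → ℝ) (R : ℝ) : Sym d := fun x ξ =>
  ((((rnorm ξ) ^ 2)⁻¹ * cutXR χ R ξ : ℝ) : ℂ) * b2sym F u x ξ

/-- `λ₂ = ((1+ã_{2,R})² - |b̃_{2,R}|²)^{1/2}`. -/
def lam2 (F : (Fin (d + 1) → ℂ) → ℂ) (u : Fn d) (χ : ℝ → ℝ) (R : ℝ) :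
    Vec d → Vec d → ℝ := fun x ξ =>
  Real.sqrt ((1 + (a2til F u χ R x ξ).re) ^ 2 - ‖b2til F u χ R x ξ‖ ^ 2)

/-- The normalizing denominator `(2λ₂(1+ã_{2,R}+λ₂))^{1/2}`. -/
def sden (F : (Fin (d + 1) → ℂ) → ℂ) (u : Fn d) (χ : ℝ → ℝ) (R : ℝ) :
    Vec d → Vec d → ℝ := fun x ξ =>
  Real.sqrt (2 * lam2 F u χ R x ξ * (1 + (a2til F u χ R x ξ).re + lam2 F u χ R x ξ))

/-- The symbol `s₁`. -/
def s1sym (F : (Fin (d + 1) → ℂ) → ℂ) (u : Fn d) (χ : ℝ → ℝ) (R : ℝ) : Sym d := fun x ξ =>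
  (((1 + (a2til F u χ R x ξ).re + lam2 F u χ R x ξ) / sden F u χ R x ξ : ℝ) : ℂ)

/-- The symbol `s₂`. -/
def s2sym (F : (Fin (d + 1) → ℂ) → ℂ) (u : Fn d) (χ : ℝ → ℝ) (R : ℝ) : Sym d := fun x ξ =>
  -b2til F u χ R x ξ / ((sden F u χ R x ξ : ℝ) : ℂ)

/-- `ã⁺_{2,R} = λ₂ - 1`. -/
def a2plus (F : (Fin (d + 1) → ℂ) → ℂ) (u : Fn d) (χ : ℝ → ℝ) (R : ℝ) : Sym d := fun x ξ =>
  ((lam2 F u χ R x ξ - 1 : ℝ) : ℂ)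

/-- The diagonalized second-order symbol `a₂^{(1)}(x,ξ) = |ξ|² ã⁺_{2,R}(x,ξ)`. -/
def a2one (F : (Fin (d + 1) → ℂ) → ℂ) (u : Fn d) (χ : ℝ → ℝ) (R : ℝ) : Sym d := fun x ξ =>
  (((rnorm ξ) ^ 2 * (lam2 F u χ R x ξ - 1) : ℝ) : ℂ)

/-- The real scalar symbol `ℒ(x,ξ) = |ξ|² + a₂^{(1)}(x,ξ)`. -/
def Lscal (F : (Fin (d + 1) → ℂ) → ℂ) (u : Fn d) (χ : ℝ → ℝ) (R : ℝ) :
    Vec d → Vec d → ℝ := fun x ξ =>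
  (rnorm ξ) ^ 2 + (rnorm ξ) ^ 2 * (lam2 F u χ R x ξ - 1)

/-- The matrix `S(x,ξ)`. -/
def Smat (F : (Fin (d + 1) → ℂ) → ℂ) (u : Fn d) (χ : ℝ → ℝ) (R : ℝ) (x ξ : Vec d) :
    Matrix (Fin 2) (Fin 2) ℂ :=
  !![s1sym F u χ R x ξ, s2sym F u χ R x ξ;
     (starRingEnd ℂ) (s2sym F u χ R x ξ), s1sym F u χ R x ξ]

/-- The matrix `S^{-1}(x,ξ)`. -/
def SmatInv (F : (Fin (d + 1) → ℂ) → ℂ) (u : Fn d) (χ : ℝ → ℝ) (R : ℝ) (x ξ : Vec d) :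
    Matrix (Fin 2) (Fin 2) ℂ :=
  !![s1sym F u χ R x ξ, -s2sym F u χ R x ξ;
     -(starRingEnd ℂ) (s2sym F u χ R x ξ), s1sym F u χ R x ξ]

/-- The matrix `Ã_{2,R}(x,ξ)`. -/
def A2tilMat (F : (Fin (d + 1) → ℂ) → ℂ) (u : Fn d) (χ : ℝ → ℝ) (R : ℝ) (x ξ : Vec d) :
    Matrix (Fin 2) (Fin 2) ℂ :=
  !![a2til F u χ R x ξ, b2til F u χ R x ξ;
     (starRingEnd ℂ) (b2til F u χ R x (-ξ)), a2til F u χ R x ξ]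

/-- The matrix `E = diag(1,-1)`. -/
def EmatM : Matrix (Fin 2) (Fin 2) ℂ := !![1, 0; 0, -1]

/-- The matrix of symbols `S^{-1}(x,ξ)`. -/
def SinvMatSym (F : (Fin (d + 1) → ℂ) → ℂ) (u : Fn d) (χ : ℝ → ℝ) (R : ℝ) :
    Fin 2 → Fin 2 → Sym d :=
  ![![s1sym F u χ R, fun x ξ => -s2sym F u χ R x ξ],
    ![fun x ξ => -(starRingEnd ℂ) (s2sym F u χ R x ξ), s1sym F u χ R]]

/-- The entry `s₁^{(1)}` of the matrix `S₁`. -/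
def s1_1 (F : (Fin (d + 1) → ℂ) → ℂ) (u : Fn d) (χ : ℝ → ℝ) (R : ℝ) : Sym d := fun x ξ =>
  1 / (2 * Complex.I) *
    (poisson (s2sym F u χ R) (starSym (s2sym F u χ R)) x ξ * s1sym F u χ R x ξ
      + 2 * poisson (s1sym F u χ R) (s2sym F u χ R) x ξ *
          (starRingEnd ℂ) (s2sym F u χ R x ξ))

/-- The entry `s₂^{(1)}` of the matrix `S₁`. -/
def s2_1 (F : (Fin (d + 1) → ℂ) → ℂ) (u : Fn d) (χ : ℝ → ℝ) (R : ℝ) : Sym d := fun x ξ =>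
  1 / (2 * Complex.I) *
    (poisson (s2sym F u χ R) (starSym (s2sym F u χ R)) x ξ * s2sym F u χ R x ξ
      + 2 * poisson (s1sym F u χ R) (s2sym F u χ R) x ξ * s1sym F u χ R x ξ)

/-- The matrix `S₁(x,ξ)`. -/
def S1mat (F : (Fin (d + 1) → ℂ) → ℂ) (u : Fn d) (χ : ℝ → ℝ) (R : ℝ) (x ξ : Vec d) :
    Matrix (Fin 2) (Fin 2) ℂ :=
  (1 / (2 * Complex.I)) •
    (!![poisson (s2sym F u χ R) (starSym (s2sym F u χ R)) x ξ,
          2 * poisson (s1sym F u χ R) (s2sym F u χ R) x ξ;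
        -2 * poisson (s1sym F u χ R) (starSym (s2sym F u χ R)) x (-ξ),
          poisson (s2sym F u χ R) (starSym (s2sym F u χ R)) x (-ξ)] *
      Smat F u χ R x ξ)

/-- The symbol `g₁`. -/
def g1sym (F : (Fin (d + 1) → ℂ) → ℂ) (u : Fn d) (χ : ℝ → ℝ) (R : ℝ) : Sym d := fun x ξ =>
  1 / (2 * Complex.I) * poisson (s1_1 F u χ R) (s1sym F u χ R) x ξ
    - 1 / (2 * Complex.I) * poisson (s2_1 F u χ R) (starSym (s2sym F u χ R)) x ξ
    + 1 / 8 * sigmaB (s2sym F u χ R) (starSym (s2sym F u χ R)) x ξ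

/-- The symbol `g₂`. -/
def g2sym (F : (Fin (d + 1) → ℂ) → ℂ) (u : Fn d) (χ : ℝ → ℝ) (R : ℝ) : Sym d := fun x ξ =>
  -(1 / (2 * Complex.I)) * poisson (s1_1 F u χ R) (s2sym F u χ R) x ξ
    + 1 / (2 * Complex.I) * poisson (s2_1 F u χ R) (s1sym F u χ R) x ξ

/-- The derivative operator `∂_{x_i}` at the level of Fourier coefficients. -/
def dOp (i : Fin d) (c : Seq d) : Seq d := fun n => Complex.I * ((n i : ℝ) : ℂ) * c n

/-- A positive constant depending monotonically on a size parameter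
(hence bounded from above as the parameter goes to zero). -/
def GoodConst (C : ℝ → ℝ) : Prop := Monotone C ∧ ∀ x : ℝ, 0 < C x

/-!
The product `fg` and the paraproducts `T_f g` and `T_g f` are bilinear Fourier multipliers acting on
`(f̂, ĝ)`, with kernels `1`, `χ_ε(|v|/⟨v+2w⟩)` and `χ_ε(|w|/⟨w+2v⟩)`; so `ℛ` is the multiplier with
kernel `a = 1 - χ_ε(|v|/⟨v+2w⟩) - χ_ε(|w|/⟨w+2v⟩)`. If one frequency is much larger than the other,
one of the two cut-offs is `1` and the other is `0`. Hence `a` is supported where `|v|` and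
`|w|` are comparable, and the bounded kernel `a` has off-diagonal decay of every order. There the
output frequency is at most a multiple of each input frequency, so `s + ρ` derivatives on the output
can be distributed as `s` on `f` and `ρ` on `g`; Young's inequality `ℓ² * ℓ¹ → ℓ²` and the embedding
of `H^{s-ρ}`, `s - ρ > d/2`, into the Wiener algebra give the smoothing estimate.
-/

/-! ### The frequency lattice -/

/-- The inclusion `ℤ^d ⊆ ℝ^d`, into Euclidean space so that `znorm` becomes the ambient norm. -/
def latticeEmb (d : ℕ) : Zd d →+ EuclideanSpace ℝ (Fin d) where
  toFun n := WithLp.toLp 2 fun i => (n i : ℝ)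
  map_zero' := by ext i; simp
  map_add' v w := by ext i; simp

lemma znorm_eq_norm (n : Zd d) : znorm n = ‖latticeEmb d n‖ := by
  simp [znorm, EuclideanSpace.norm_eq, latticeEmb]

lemma znorm_nonneg (n : Zd d) : 0 ≤ znorm n := Real.sqrt_nonneg _

lemma znorm_add_le (v w : Zd d) : znorm (v + w) ≤ znorm v + znorm w := by
  simpa only [znorm_eq_norm, map_add] using norm_add_le (latticeEmb d v) (latticeEmb d w)

lemma znorm_sub_le (v w : Zd d) : znorm (v - w) ≤ znorm v + znorm w := by
  simpa only [znorm_eq_norm, map_sub] using norm_sub_le (latticeEmb d v) (latticeEmb d w)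

lemma znorm_add_self (n : Zd d) : znorm (n + n) = 2 * znorm n := by
  rw [znorm_eq_norm, znorm_eq_norm, map_add, ← two_smul ℝ, norm_smul, Real.norm_ofNat]

lemma latticeEmb_injective : Function.Injective (latticeEmb d) := fun v w h => by
  ext i
  simpa [latticeEmb] using congrArg (fun x => x i) h

lemma latticeEmb_mem_span (n : Zd d) :
    latticeEmb d n ∈
      Submodule.span ℤ (Set.range (EuclideanSpace.basisFun (Fin d) ℝ).toBasis) := by
  refine (Module.Basis.mem_span_iff_repr_mem ℤ _ _).mpr fun i => ⟨n i, ?_⟩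
  simp [latticeEmb]

lemma one_le_jb (n : Zd d) : 1 ≤ jb n :=
  Real.one_le_sqrt.mpr (le_add_of_nonneg_right (Finset.sum_nonneg fun _ _ => sq_nonneg _))

lemma jb_pos (n : Zd d) : 0 < jb n := one_pos.trans_le (one_le_jb n)

lemma jb_rpow_nonneg (n : Zd d) (r : ℝ) : 0 ≤ jb n ^ r := Real.rpow_nonneg (jb_pos n).le r

lemma znorm_le_jb (n : Zd d) : znorm n ≤ jb n := Real.sqrt_le_sqrt (by linarith)

lemma jb_le_one_add_znorm (n : Zd d) : jb n ≤ 1 + znorm n := by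
  have hsum : 0 ≤ ∑ i, (n i : ℝ) ^ 2 := Finset.sum_nonneg fun _ _ => sq_nonneg _
  refine Real.sqrt_le_iff.mpr ⟨by linarith [znorm_nonneg n], ?_⟩
  have hsq : znorm n ^ 2 = ∑ i, (n i : ℝ) ^ 2 := Real.sq_sqrt hsum
  linarith [znorm_nonneg n, add_sq 1 (znorm n)]

lemma one_add_znorm_le_two_mul_jb (n : Zd d) : 1 + znorm n ≤ 2 * jb n := by
  linarith [one_le_jb n, znorm_le_jb n]

lemma jb_add_le (v w : Zd d) : jb (v + w) ≤ 2 * (1 + max (znorm v) (znorm w)) := by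
  linarith [jb_le_one_add_znorm (v + w), znorm_add_le v w, le_max_left (znorm v) (znorm w),
    le_max_right (znorm v) (znorm w)]

theorem summable_jb_rpow {r : ℝ} (hr : r < -d) : Summable fun n : Zd d => jb n ^ r := by
  set L := Submodule.span ℤ (Set.range (EuclideanSpace.basisFun (Fin d) ℝ).toBasis)
  have hrank : Module.finrank ℤ L = d := by
    rw [ZLattice.rank ℝ, finrank_euclideanSpace_fin]
  have hinj : Function.Injective fun n : Zd d => (⟨latticeEmb d n, latticeEmb_mem_span n⟩ : L) :=
    fun v w h => latticeEmb_injective (congrArg Subtype.val h)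
  have hznorm : Summable fun n : Zd d => znorm n ^ r := by
    have hL : Summable fun z : L => ‖z‖ ^ r := ZLattice.summable_norm_rpow L r (by rwa [hrank])
    simpa only [Function.comp_def, Submodule.coe_norm, ← znorm_eq_norm] using
      hL.comp_injective hinj
  refine hznorm.of_norm_bounded_eventually ((Set.finite_singleton 0).subset fun n hn => ?_)
  by_contra hne
  have hpos : 0 < znorm n := by
    rw [znorm_eq_norm, norm_pos_iff]
    exact (map_ne_zero_iff _ latticeEmb_injective).mpr hne
  refine hn ?_
  change ‖jb n ^ r‖ ≤ znorm n ^ r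
  rw [Real.norm_of_nonneg (jb_rpow_nonneg n r)]
  exact Real.rpow_le_rpow_of_nonpos hpos (znorm_le_jb n) (hr.le.trans (by simp))

/-! ### Inequalities for real series -/

theorem summable_mul_and_tsum_mul_le_sqrt_mul_sqrt {ι : Type*} {f g : ι → ℝ}
    (hf₀ : ∀ i, 0 ≤ f i) (hg₀ : ∀ i, 0 ≤ g i)
    (hf : Summable fun i => f i ^ 2) (hg : Summable fun i => g i ^ 2) :
    Summable (fun i => f i * g i) ∧
      ∑' i, f i * g i ≤ √(∑' i, f i ^ 2) * √(∑' i, g i ^ 2) := by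
  simp only [← Real.rpow_two, Real.sqrt_eq_rpow] at hf hg ⊢
  exact Real.summable_and_inner_le_Lp_mul_Lq_tsum_of_nonneg .two_two hf₀ hg₀ hf hg

section Young

variable {G : Type*} [AddGroup G] {f g : G → ℝ}

lemma summable_prod_sub_mul (hf₀ : ∀ x, 0 ≤ f x) (hg₀ : ∀ x, 0 ≤ g x)
    (hf : Summable f) (hg : Summable g) : Summable fun p : G × G => f (p.1 - p.2) * g p.2 :=
  (Equiv.prodCongrLeft fun y : G => Equiv.subRight y).summable_iff.mpr
    (hf.mul_of_nonneg hg hf₀ hg₀)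

lemma tsum_tsum_sub_mul (hf₀ : ∀ x, 0 ≤ f x) (hg₀ : ∀ x, 0 ≤ g x)
    (hf : Summable f) (hg : Summable g) :
    ∑' x, ∑' y, f (x - y) * g y = (∑' x, f x) * ∑' y, g y := by
  rw [hf.tsum_mul_tsum hg (hf.mul_of_nonneg hg hf₀ hg₀),
    ← (Equiv.prodCongrLeft fun y : G => Equiv.subRight y).tsum_eq,
    ← (summable_prod_sub_mul hf₀ hg₀ hf hg).tsum_prod]
  rfl

lemma summable_and_sq_tsum_sub_mul_le (hf₀ : ∀ x, 0 ≤ f x) (hg₀ : ∀ x, 0 ≤ g x)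
    (hf : Summable fun x => f x ^ 2) (hg : Summable g) (x : G) :
    Summable (fun y => f (x - y) * g y) ∧
      (∑' y, f (x - y) * g y) ^ 2 ≤ (∑' y, g y) * ∑' y, f (x - y) ^ 2 * g y := by
  have hfg : Summable fun y => f (x - y) ^ 2 * g y :=
    (summable_prod_sub_mul (fun _ => sq_nonneg _) hg₀ hf hg).prod_factor x
  have hsplit : ∀ y, √(g y) * (f (x - y) * √(g y)) = f (x - y) * g y := fun y => by
    rw [mul_left_comm, Real.mul_self_sqrt (hg₀ y)]
  obtain ⟨hsum, hle⟩ := summable_mul_and_tsum_mul_le_sqrt_mul_sqrt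
    (f := fun y => √(g y)) (g := fun y => f (x - y) * √(g y)) (fun _ => Real.sqrt_nonneg _)
    (fun _ => mul_nonneg (hf₀ _) (Real.sqrt_nonneg _))
    (by simpa only [Real.sq_sqrt (hg₀ _)] using hg)
    (by simpa only [mul_pow, Real.sq_sqrt (hg₀ _)] using hfg)
  simp only [hsplit, mul_pow, Real.sq_sqrt (hg₀ _)] at hsum hle
  refine ⟨hsum, ?_⟩
  rw [← Real.sqrt_mul (tsum_nonneg hg₀)] at hle
  exact (Real.le_sqrt (tsum_nonneg fun y => mul_nonneg (hf₀ _) (hg₀ y))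
    (mul_nonneg (tsum_nonneg hg₀)
      (tsum_nonneg fun y => mul_nonneg (sq_nonneg _) (hg₀ y)))).mp hle

theorem summable_and_sqrt_tsum_sq_tsum_sub_mul_le (hf₀ : ∀ x, 0 ≤ f x) (hg₀ : ∀ x, 0 ≤ g x)
    (hf : Summable fun x => f x ^ 2) (hg : Summable g) :
    Summable (fun x => (∑' y, f (x - y) * g y) ^ 2) ∧
      √(∑' x, (∑' y, f (x - y) * g y) ^ 2) ≤ √(∑' x, f x ^ 2) * ∑' x, g x := by
  have hle := fun x => (summable_and_sq_tsum_sub_mul_le hf₀ hg₀ hf hg x).2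
  have hbound : Summable fun x => (∑' y, g y) * ∑' y, f (x - y) ^ 2 * g y :=
    (summable_prod_sub_mul (fun _ => sq_nonneg _) hg₀ hf hg).prod.mul_left _
  have hsum := hbound.of_nonneg_of_le (fun _ => sq_nonneg _) hle
  refine ⟨hsum, Real.sqrt_le_iff.mpr
    ⟨mul_nonneg (Real.sqrt_nonneg _) (tsum_nonneg hg₀), ?_⟩⟩
  calc ∑' x, (∑' y, f (x - y) * g y) ^ 2
      ≤ ∑' x, (∑' y, g y) * ∑' y, f (x - y) ^ 2 * g y := hsum.tsum_le_tsum hle hbound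
    _ = (∑' y, g y) * ((∑' x, f x ^ 2) * ∑' y, g y) := by
      rw [tsum_mul_left, tsum_tsum_sub_mul (fun _ => sq_nonneg _) hg₀ hf hg]
    _ = (√(∑' x, f x ^ 2) * ∑' x, g x) ^ 2 := by
      rw [mul_pow, Real.sq_sqrt (tsum_nonneg fun _ => sq_nonneg _)]
      ring

end Young

/-! ### Weighted sequence spaces -/

lemma sq_jb_rpow_mul (s : ℝ) (n : Zd d) (x : ℝ) :
    (jb n ^ s * x) ^ 2 = jb n ^ (2 * s) * x ^ 2 := by
  rw [mul_pow, mul_comm 2 s, Real.rpow_mul (jb_pos n).le, Real.rpow_two]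

lemma inHsSeq_iff {s : ℝ} {c : Seq d} :
    InHsSeq s c ↔ Summable fun n => (jb n ^ s * ‖c n‖) ^ 2 := by
  simp only [InHsSeq, sq_jb_rpow_mul]

lemma hsNorm_eq (s : ℝ) (c : Seq d) : hsNorm s c = √(∑' n, (jb n ^ s * ‖c n‖) ^ 2) := by
  simp only [hsNorm, hsNormSq, sq_jb_rpow_mul]

theorem InHsSeq.summable_and_tsum_jb_rpow_mul_norm_le {s t : ℝ} (hst : (d : ℝ) / 2 < s - t)
    {c : Seq d} (hc : InHsSeq s c) :
    Summable (fun n => jb n ^ t * ‖c n‖) ∧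
      ∑' n, jb n ^ t * ‖c n‖ ≤ √(∑' n : Zd d, jb n ^ (2 * (t - s))) * hsNorm s c := by
  have hsq (n : Zd d) : (jb n ^ (t - s)) ^ 2 = jb n ^ (2 * (t - s)) := by
    simpa only [mul_one, one_pow] using sq_jb_rpow_mul (t - s) n 1
  have hsplit (n : Zd d) : jb n ^ (t - s) * (jb n ^ s * ‖c n‖) = jb n ^ t * ‖c n‖ := by
    rw [← mul_assoc, ← Real.rpow_add (jb_pos n), sub_add_cancel]
  have hCS := summable_mul_and_tsum_mul_le_sqrt_mul_sqrt
    (f := fun n : Zd d => jb n ^ (t - s)) (g := fun n => jb n ^ s * ‖c n‖)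
    (fun n => jb_rpow_nonneg n _) (fun n => mul_nonneg (jb_rpow_nonneg n s) (norm_nonneg _))
    (by simpa only [hsq] using summable_jb_rpow (by linarith)) (inHsSeq_iff.mp hc)
  simpa only [hsplit, hsq, ← hsNorm_eq] using hCS

lemma InHsSeq.summable_norm {s : ℝ} (hs : (d : ℝ) / 2 < s) {c : Seq d} (hc : InHsSeq s c) :
    Summable fun n => ‖c n‖ := by
  simpa only [Real.rpow_zero, one_mul] using
    (hc.summable_and_tsum_jb_rpow_mul_norm_le (t := 0) (by rwa [sub_zero])).1

lemma inHsSeq_and_hsNorm_le_of_le_mul {r N : ℝ} {c : Seq d} {F : Zd d → ℝ} (hN : 0 ≤ N)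
    (hF : Summable fun n => F n ^ 2) (hle : ∀ n, jb n ^ r * ‖c n‖ ≤ N * F n) :
    InHsSeq r c ∧ hsNorm r c ≤ N * √(∑' n, F n ^ 2) := by
  have hsq (n : Zd d) : (jb n ^ r * ‖c n‖) ^ 2 ≤ N ^ 2 * F n ^ 2 :=
    (pow_le_pow_left₀ (mul_nonneg (jb_rpow_nonneg n r) (norm_nonneg _)) (hle n) 2).trans_eq
      (mul_pow _ _ _)
  have hc : Summable fun n => (jb n ^ r * ‖c n‖) ^ 2 :=
    (hF.mul_left _).of_nonneg_of_le (fun _ => sq_nonneg _) hsq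
  refine ⟨inHsSeq_iff.mpr hc, ?_⟩
  calc hsNorm r c ≤ √(∑' n, N ^ 2 * F n ^ 2) :=
        (hsNorm_eq r c).trans_le (Real.sqrt_le_sqrt (hc.tsum_le_tsum hsq (hF.mul_left _)))
    _ = N * √(∑' n, F n ^ 2) := by
      rw [tsum_mul_left, Real.sqrt_mul (sq_nonneg N), Real.sqrt_sq hN]

/-! ### Bilinear Fourier multipliers -/

/-- The constant `(2π)^{-d/2}` normalising the Fourier transform on `𝕋^d`. -/
def fourierConst (d : ℕ) : ℂ := (((2 * π : ℝ) ^ (-(d : ℝ) / 2) : ℝ) : ℂ)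

/-- The bilinear Fourier multiplier with kernel `a`, acting on sequences of Fourier coefficients.
The kernel is indexed by the two input frequencies `v = ξ - η` and `w = η`, and the normalisation is
such that the kernel `1` corresponds to the pointwise product of functions. -/
def bilinMul (a : Zd d → Zd d → ℂ) (c e : Seq d) : Seq d := fun ξ =>
  fourierConst d * ∑' η, a (ξ - η) η * c (ξ - η) * e η

lemma bilinMul_swap (a : Zd d → Zd d → ℂ) (c e : Seq d) :
    bilinMul a c e = bilinMul (fun v w => a w v) e c := by
  funext ξ
  unfold bilinMul
  rw [← (Equiv.subLeft ξ).tsum_eq]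
  simp only [Equiv.subLeft_apply, sub_sub_cancel, mul_right_comm]

section Bounded

variable {a b : Zd d → Zd d → ℂ} {A B : ℝ} {c e : Seq d}

lemma summable_bilinMul (ha : ∀ v w, ‖a v w‖ ≤ A) (hc : Summable fun n => ‖c n‖)
    (he : Summable fun n => ‖e n‖) (ξ : Zd d) :
    Summable fun η => a (ξ - η) η * c (ξ - η) * e η := by
  have hconv : Summable fun η => ‖c (ξ - η)‖ * ‖e η‖ :=
    (summable_prod_sub_mul (fun n => norm_nonneg (c n)) (fun n => norm_nonneg (e n)) hc he
      ).prod_factor ξ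
  refine .of_norm_bounded (hconv.mul_left A) fun η => ?_
  rw [mul_assoc, norm_mul, norm_mul]
  exact mul_le_mul_of_nonneg_right (ha _ _) (by positivity)

lemma bilinMul_sub (ha : ∀ v w, ‖a v w‖ ≤ A) (hb : ∀ v w, ‖b v w‖ ≤ B)
    (hc : Summable fun n => ‖c n‖) (he : Summable fun n => ‖e n‖) :
    bilinMul (a - b) c e = bilinMul a c e - bilinMul b c e := by
  funext ξ
  simp only [bilinMul, Pi.sub_apply, sub_mul, ← mul_sub]
  rw [(summable_bilinMul ha hc he ξ).tsum_sub (summable_bilinMul hb hc he ξ)]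

end Bounded

/-- Off-diagonal decay of order `ρ`: a kernel satisfying this is concentrated on the pairs of
frequencies of comparable size. -/
def HasOffDiagonalDecay (ρ : ℝ) (a : Zd d → Zd d → ℂ) : Prop :=
  ∃ C > (0 : ℝ), ∀ v w : Zd d,
    ‖a v w‖ ≤ C * (1 + min (znorm v) (znorm w)) ^ ρ / (1 + max (znorm v) (znorm w)) ^ ρ

lemma one_add_min_znorm_pos (v w : Zd d) : 0 < 1 + min (znorm v) (znorm w) :=
  add_pos_of_pos_of_nonneg one_pos (le_min (znorm_nonneg v) (znorm_nonneg w))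

lemma one_add_max_znorm_pos (v w : Zd d) : 0 < 1 + max (znorm v) (znorm w) :=
  add_pos_of_pos_of_nonneg one_pos (le_max_of_le_left (znorm_nonneg v))

lemma hasOffDiagonalDecay_of_support {a : Zd d → Zd d → ℂ} {A K ρ : ℝ} (hA : 0 < A) (hK : 0 < K)
    (hρ : 0 ≤ ρ) (ha : ∀ v w, ‖a v w‖ ≤ A)
    (hsupp : ∀ v w, a v w ≠ 0 →
      1 + max (znorm v) (znorm w) ≤ K * (1 + min (znorm v) (znorm w))) :
    HasOffDiagonalDecay ρ a := by
  refine ⟨A * K ^ ρ, by positivity, fun v w => ?_⟩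
  have hmin := one_add_min_znorm_pos v w
  have hmax := one_add_max_znorm_pos v w
  by_cases h₀ : a v w = 0
  · rw [h₀, norm_zero]
    positivity
  · rw [le_div_iff₀ (by positivity), mul_assoc, ← Real.mul_rpow hK.le hmin.le]
    gcongr
    exacts [ha v w, hsupp v w h₀]

lemma HasOffDiagonalDecay.exists_jb_rpow_mul_norm_le {a : Zd d → Zd d → ℂ} {r s : ℝ}
    (ha : HasOffDiagonalDecay r a) (hs : 0 ≤ s) (hsr : s ≤ r) :
    ∃ N > (0 : ℝ), ∀ v w, jb (v + w) ^ r * ‖a v w‖ ≤ N * (jb v ^ s * jb w ^ (r - s)) := by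
  obtain ⟨C, hC, hdecay⟩ := ha
  have hr : 0 ≤ r := hs.trans hsr
  refine ⟨C * 4 ^ r, by positivity, fun v w => ?_⟩
  have hmin := one_add_min_znorm_pos v w
  have hmax := one_add_max_znorm_pos v w
  have hv : 1 + min (znorm v) (znorm w) ≤ 2 * jb v :=
    (add_le_add_right (min_le_left _ _) 1).trans (one_add_znorm_le_two_mul_jb v)
  have hw : 1 + min (znorm v) (znorm w) ≤ 2 * jb w :=
    (add_le_add_right (min_le_right _ _) 1).trans (one_add_znorm_le_two_mul_jb w)
  have hjb := jb_pos (v + w)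
  have hjv := jb_pos v
  have hjw := jb_pos w
  calc jb (v + w) ^ r * ‖a v w‖
      ≤ (2 * (1 + max (znorm v) (znorm w))) ^ r *
          (C * (1 + min (znorm v) (znorm w)) ^ r / (1 + max (znorm v) (znorm w)) ^ r) := by
        gcongr
        exacts [jb_add_le v w, hdecay v w]
    _ = C * 2 ^ r *
          ((1 + min (znorm v) (znorm w)) ^ s * (1 + min (znorm v) (znorm w)) ^ (r - s)) := by
        rw [← Real.rpow_add hmin, add_sub_cancel, Real.mul_rpow two_pos.le hmax.le]
        field_simp
    _ ≤ C * 2 ^ r * ((2 * jb v) ^ s * (2 * jb w) ^ (r - s)) := by gcongr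
    _ = C * 4 ^ r * (jb v ^ s * jb w ^ (r - s)) := by
        have h4 : (4 : ℝ) ^ r = 2 ^ r * (2 ^ s * 2 ^ (r - s)) := by
          rw [← Real.rpow_add two_pos, add_sub_cancel, ← Real.mul_rpow two_pos.le two_pos.le]
          norm_num
        rw [h4, Real.mul_rpow two_pos.le hjv.le, Real.mul_rpow two_pos.le hjw.le]
        ring

lemma jb_rpow_mul_norm_bilinMul_le {a : Zd d → Zd d → ℂ} {c e : Seq d} {F G : Zd d → ℝ}
    {r N : ℝ} (hle : ∀ v w, jb (v + w) ^ r * ‖a v w * c v * e w‖ ≤ N * (F v * G w)) {ξ : Zd d}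
    (hFG : Summable fun η => F (ξ - η) * G η) :
    jb ξ ^ r * ‖bilinMul a c e ξ‖ ≤ ‖fourierConst d‖ * N * ∑' η, F (ξ - η) * G η := by
  have hpos : 0 < jb ξ ^ r := Real.rpow_pos_of_pos (jb_pos ξ) r
  have hterm (η : Zd d) :
      ‖a (ξ - η) η * c (ξ - η) * e η‖ ≤ N / jb ξ ^ r * (F (ξ - η) * G η) := by
    rw [div_mul_eq_mul_div, le_div_iff₀' hpos]
    simpa only [sub_add_cancel] using hle (ξ - η) η
  have htsum := tsum_of_norm_bounded (hFG.hasSum.mul_left (N / jb ξ ^ r)) hterm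
  calc jb ξ ^ r * ‖bilinMul a c e ξ‖
      ≤ jb ξ ^ r * (‖fourierConst d‖ * (N / jb ξ ^ r * ∑' η, F (ξ - η) * G η)) := by
        rw [bilinMul, norm_mul]
        gcongr
    _ = ‖fourierConst d‖ * N * ∑' η, F (ξ - η) * G η := by field_simp

/-- The decay trades the output weight for `s` derivatives on one factor and `r - s` on the other;
the second factor then lies in a weighted `ℓ¹`, and Young's inequality `ℓ² * ℓ¹ → ℓ²` concludes. -/
theorem HasOffDiagonalDecay.exists_hsNorm_bilinMul_le {a : Zd d → Zd d → ℂ} {r s t : ℝ}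
    (ha : HasOffDiagonalDecay r a) (hs : 0 ≤ s) (hsr : s ≤ r) (hrt : r - s < t - (d : ℝ) / 2) :
    ∃ C > (0 : ℝ), ∀ c e : Seq d, InHsSeq s c → InHsSeq t e →
      InHsSeq r (bilinMul a c e) ∧ hsNorm r (bilinMul a c e) ≤ C * hsNorm s c * hsNorm t e := by
  obtain ⟨N, hN, hkernel⟩ := ha.exists_jb_rpow_mul_norm_le hs hsr
  set S : ℝ := √(∑' n : Zd d, jb n ^ (2 * (r - s - t)))
  refine ⟨‖fourierConst d‖ * N * S + 1, by positivity, fun c e hc he => ?_⟩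
  set F : Zd d → ℝ := fun n => jb n ^ s * ‖c n‖
  set G : Zd d → ℝ := fun n => jb n ^ (r - s) * ‖e n‖
  have hF₀ (n : Zd d) : 0 ≤ F n := mul_nonneg (jb_rpow_nonneg n s) (norm_nonneg _)
  have hG₀ (n : Zd d) : 0 ≤ G n := mul_nonneg (jb_rpow_nonneg n _) (norm_nonneg _)
  have hF : Summable fun n => F n ^ 2 := inHsSeq_iff.mp hc
  obtain ⟨hG, hG_le⟩ : Summable G ∧ ∑' n, G n ≤ S * hsNorm t e :=
    he.summable_and_tsum_jb_rpow_mul_norm_le (by linarith)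
  have hterm (v w : Zd d) : jb (v + w) ^ r * ‖a v w * c v * e w‖ ≤ N * (F v * G w) := by
    calc jb (v + w) ^ r * ‖a v w * c v * e w‖
        = jb (v + w) ^ r * ‖a v w‖ * (‖c v‖ * ‖e w‖) := by
          rw [norm_mul, norm_mul]
          ring
      _ ≤ N * (jb v ^ s * jb w ^ (r - s)) * (‖c v‖ * ‖e w‖) :=
          mul_le_mul_of_nonneg_right (hkernel v w) (by positivity)
      _ = N * (F v * G w) := by ring
  obtain ⟨hYoung, hYoung_le⟩ := summable_and_sqrt_tsum_sq_tsum_sub_mul_le hF₀ hG₀ hF hG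
  obtain ⟨hmem, hle⟩ := inHsSeq_and_hsNorm_le_of_le_mul (r := r) (c := bilinMul a c e)
    (by positivity) hYoung fun ξ =>
      jb_rpow_mul_norm_bilinMul_le hterm (summable_and_sq_tsum_sub_mul_le hF₀ hG₀ hF hG ξ).1
  refine ⟨hmem, ?_⟩
  have hs_nonneg : 0 ≤ hsNorm s c := Real.sqrt_nonneg _
  have ht_nonneg : 0 ≤ hsNorm t e := Real.sqrt_nonneg _
  rw [← hsNorm_eq] at hYoung_le
  calc hsNorm r (bilinMul a c e)
      ≤ ‖fourierConst d‖ * N * (hsNorm s c * (S * hsNorm t e)) := by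
        refine hle.trans ?_
        gcongr
        exact hYoung_le.trans (by gcongr)
    _ = ‖fourierConst d‖ * N * S * (hsNorm s c * hsNorm t e) := by ring
    _ ≤ (‖fourierConst d‖ * N * S + 1) * (hsNorm s c * hsNorm t e) := by
        gcongr
        exact le_add_of_nonneg_right zero_le_one
    _ = (‖fourierConst d‖ * N * S + 1) * hsNorm s c * hsNorm t e := (mul_assoc _ _ _).symm

/-! ### Fourier coefficients of products -/

/-- The character `x ↦ e^{i n·x}` of the torus. -/
def torusChar (n : Zd d) (x : Vec d) : ℂ := cexp (I * ((∑ i, (n i : ℝ) * x i : ℝ) : ℂ))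

lemma norm_torusChar (n : Zd d) (x : Vec d) : ‖torusChar n x‖ = 1 := by
  rw [torusChar, mul_comm, Complex.norm_exp_ofReal_mul_I]

lemma continuous_torusChar (n : Zd d) : Continuous (torusChar n) := by
  unfold torusChar
  fun_prop

lemma torusChar_add (m n : Zd d) (x : Vec d) :
    torusChar (m + n) x = torusChar m x * torusChar n x := by
  simp only [torusChar, ← Complex.exp_add, ← mul_add, ← Complex.ofReal_add,
    ← Finset.sum_add_distrib, ← add_mul, Pi.add_apply, Int.cast_add]

lemma fCoeff_eq_integral_torusChar (u : Fn d) (n : Zd d) :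
    fCoeff u n = fourierConst d * ∫ x in box d, u x * torusChar (-n) x := by
  simp only [fCoeff, fourierConst, torusChar, Pi.neg_apply, Int.cast_neg, neg_mul,
    Finset.sum_neg_distrib, Complex.ofReal_neg, mul_neg]

/-- Pointwise convergence to `u` of the Fourier series with coefficients `c`. -/
def HasFourierSeries (c : Seq d) (u : Fn d) : Prop :=
  ∀ x, HasSum (fun n => fourierConst d * c n * torusChar n x) (u x)

lemma InHs.hasFourierSeries {s : ℝ} {u : Fn d} (hu : InHs s u) :
    HasFourierSeries (fCoeff u) u := hu.2.2

lemma InHs.summable_norm_fCoeff {s : ℝ} {u : Fn d} (hu : InHs s u) (hs : (d : ℝ) / 2 < s) :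
    Summable fun n => ‖fCoeff u n‖ := hu.2.1.summable_norm hs

lemma HasFourierSeries.continuous {c : Seq d} {u : Fn d} (hu : HasFourierSeries c u)
    (hc : Summable fun n => ‖c n‖) : Continuous u := by
  rw [show u = fun x => ∑' n, fourierConst d * c n * torusChar n x from
    funext fun x => (hu x).tsum_eq.symm]
  refine continuous_tsum (fun n => continuous_const.mul (continuous_torusChar n))
    (hc.mul_left ‖fourierConst d‖) fun n x => ?_
  rw [norm_mul, norm_mul, norm_torusChar, mul_one]

lemma integrableOn_box {u : Fn d} (hu : Continuous u) : IntegrableOn u (box d) :=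
  (hu.continuousOn.integrableOn_compact
    (isCompact_univ_pi fun _ => isCompact_Icc (a := (0 : ℝ)) (b := 2 * π))).mono_set
      (Set.pi_mono fun _ _ => Set.Ioc_subset_Icc_self)

theorem fCoeff_mul_eq_bilinMul_one {f g : Fn d} {e : Seq d} (hf : IntegrableOn f (box d))
    (he : Summable fun n => ‖e n‖) (hg : HasFourierSeries e g) :
    fCoeff (fun x => f x * g x) = bilinMul 1 (fCoeff f) e := by
  funext ξ
  set F : Zd d → Fn d := fun η x => fourierConst d * e η * (f x * torusChar (-(ξ - η)) x)
  have hF_int (η : Zd d) : IntegrableOn (F η) (box d) :=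
    (hf.mul_bdd (c := 1) (continuous_torusChar _).aestronglyMeasurable
      (.of_forall fun x => (norm_torusChar _ x).le)).const_mul _
  have hF_norm (η : Zd d) (x : Vec d) : ‖F η x‖ = ‖fourierConst d‖ * ‖e η‖ * ‖f x‖ := by
    simp only [F, norm_mul, norm_torusChar, mul_one]
  have hF_summable : Summable fun η => ∫ x in box d, ‖F η x‖ := by
    simp only [hF_norm, integral_const_mul]
    exact (he.mul_left _).mul_right _
  have hF_sum (x : Vec d) : ∑' η, F η x = f x * g x * torusChar (-ξ) x := by
    rw [mul_right_comm, ← ((hg x).mul_left (f x * torusChar (-ξ) x)).tsum_eq]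
    refine tsum_congr fun η => ?_
    simp only [F]
    rw [neg_sub, sub_eq_neg_add, torusChar_add]
    ring
  have hswap := (hasSum_integral_of_summable_integral_norm hF_int hF_summable).tsum_eq
  simp only [hF_sum] at hswap
  rw [fCoeff_eq_integral_torusChar, ← hswap, bilinMul]
  congr 1
  refine tsum_congr fun η => ?_
  rw [integral_const_mul, fCoeff_eq_integral_torusChar, Pi.one_apply, Pi.one_apply]
  ring

/-! ### The paraproduct remainder -/

section Paraproduct

variable {χ : ℝ → ℝ} {ε : ℝ}

/-- The kernel `χ_ε(|v|/⟨v+2w⟩)` of `(f, g) ↦ T_f g` as a bilinear multiplier: `v` is the frequency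
of `f` and `w` that of `g`. -/
def paraCutoff (χ : ℝ → ℝ) (ε : ℝ) (v w : Zd d) : ℝ := cutFactor χ ε (v + w) w

lemma paraC_eq_bilinMul (χ : ℝ → ℝ) (ε : ℝ) (f : Fn d) (c : Seq d) :
    paraC χ ε (fun x _ => f x) c = bilinMul (fun v w => paraCutoff χ ε v w) (fCoeff f) c := by
  funext ξ
  simp only [bilinMul, paraCutoff, sub_add_cancel]
  rfl

lemma paraCutoff_mem_Icc (hχ : IsCutoff χ) (ε : ℝ) (v w : Zd d) :
    paraCutoff χ ε v w ∈ Set.Icc (0 : ℝ) 1 := hχ.mem _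

lemma norm_paraCutoff_le_one (hχ : IsCutoff χ) (ε : ℝ) (v w : Zd d) :
    ‖(paraCutoff χ ε v w : ℂ)‖ ≤ 1 := by
  obtain ⟨h₀, h₁⟩ := paraCutoff_mem_Icc hχ ε v w
  rwa [Complex.norm_real, Real.norm_of_nonneg h₀]

lemma paraCutoff_eq_one (hχ : IsCutoff χ) (hε : 0 < ε) {v w : Zd d}
    (h : (1 + 5 / 4 * ε) * znorm v ≤ 5 / 2 * ε * znorm w) : paraCutoff χ ε v w = 1 := by
  have hjb := jb_pos (v + w + w)
  have hsum : 2 * znorm w ≤ znorm v + jb (v + w + w) :=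
    calc 2 * znorm w = znorm (v + w + w - v) := by
          rw [← znorm_add_self, add_assoc, add_sub_cancel_left]
      _ ≤ znorm (v + w + w) + znorm v := znorm_sub_le _ _
      _ ≤ znorm v + jb (v + w + w) := by linarith [znorm_le_jb (v + w + w)]
  refine hχ.eq_one _ ?_
  rw [add_sub_cancel_right, abs_of_nonneg (div_nonneg (znorm_nonneg v) (by positivity)),
    div_le_iff₀ (by positivity)]
  linarith [mul_le_mul_of_nonneg_left hsum hε.le]

lemma paraCutoff_eq_zero (hχ : IsCutoff χ) (hε : 0 < ε) {v w : Zd d}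
    (h : 8 / 5 * ε * (1 + znorm v + 2 * znorm w) ≤ znorm v) : paraCutoff χ ε v w = 0 := by
  have hjb := jb_pos (v + w + w)
  have hsum : jb (v + w + w) ≤ 1 + znorm v + 2 * znorm w := by
    linarith [jb_le_one_add_znorm (v + w + w), znorm_add_le (v + w) w, znorm_add_le v w]
  refine hχ.eq_zero _ ?_
  rw [add_sub_cancel_right, abs_of_nonneg (div_nonneg (znorm_nonneg v) (by positivity)),
    le_div_iff₀ (by positivity)]
  linarith [mul_le_mul_of_nonneg_left hsum hε.le]

/-- The kernel of the paraproduct remainder `ℛ` as a bilinear multiplier: what the cut-offs of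
`T_f g` and `T_g f` leave over from the product. -/
def paraKernel (χ : ℝ → ℝ) (ε : ℝ) (v w : Zd d) : ℂ :=
  ((1 - paraCutoff χ ε v w - paraCutoff χ ε w v : ℝ) : ℂ)

lemma paraKernel_comm (χ : ℝ → ℝ) (ε : ℝ) (v w : Zd d) :
    paraKernel χ ε v w = paraKernel χ ε w v := by
  rw [paraKernel, paraKernel, sub_right_comm]

lemma norm_paraKernel_le_one (hχ : IsCutoff χ) (ε : ℝ) (v w : Zd d) :
    ‖paraKernel χ ε v w‖ ≤ 1 := by
  obtain ⟨hv₀, hv₁⟩ := paraCutoff_mem_Icc hχ ε v w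
  obtain ⟨hw₀, hw₁⟩ := paraCutoff_mem_Icc hχ ε w v
  rw [paraKernel, Complex.norm_real, Real.norm_eq_abs, abs_le]
  constructor <;> linarith

/-- Bound on the ratio of the two frequencies on the support of `paraKernel`. It combines
`|w| ≤ (2/(5ε) + 1/2) |v|`, where the cut-off of `T_f g` is not yet `1`, and
`|w| ≤ 8ε/(5-8ε) (1 + 2|v|)`, where the cut-off of `T_g f` does not vanish; the latter is the reason
for the restriction `ε < 5/8`. -/
def paraRatio (ε : ℝ) : ℝ := 1 + 1 / ε + 16 * ε / (5 - 8 * ε)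

lemma paraRatio_pos (hε₀ : 0 < ε) (hε₁ : ε < 5 / 8) : 0 < paraRatio ε := by
  have : 0 < 5 - 8 * ε := by linarith
  unfold paraRatio
  positivity

lemma one_add_znorm_le_of_paraKernel_ne_zero (hχ : IsCutoff χ) (hε₀ : 0 < ε) (hε₁ : ε < 5 / 8)
    {v w : Zd d} (h : paraKernel χ ε v w ≠ 0) :
    1 + znorm w ≤ paraRatio ε * (1 + znorm v) := by
  have hδ : 0 < 5 - 8 * ε := by linarith
  have hv := znorm_nonneg v
  have hK₁ : 0 ≤ 1 / ε * (1 + znorm v) := by positivity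
  have hK₂ : 0 ≤ 16 * ε / (5 - 8 * ε) * (1 + znorm v) := by positivity
  have hcases : 5 / 2 * ε * znorm w < (1 + 5 / 4 * ε) * znorm v ∨
      znorm w < 8 / 5 * ε * (1 + znorm w + 2 * znorm v) := by
    by_contra! hfar
    refine h ?_
    rw [paraKernel, paraCutoff_eq_one hχ hε₀ hfar.1, paraCutoff_eq_zero hχ hε₀ hfar.2, sub_self,
      sub_zero, Complex.ofReal_zero]
  have hw : znorm w ≤ znorm v + 1 / ε * (1 + znorm v) +
      16 * ε / (5 - 8 * ε) * (1 + znorm v) := by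
    rcases hcases with hlow | hhigh
    · have : znorm w ≤ znorm v + 1 / ε * (1 + znorm v) := by
        field_simp
        nlinarith
      linarith
    · have : znorm w ≤ 16 * ε / (5 - 8 * ε) * (1 + znorm v) := by
        rw [div_mul_eq_mul_div, le_div_iff₀ hδ]
        linarith
      linarith
  calc 1 + znorm w ≤ 1 + (znorm v + 1 / ε * (1 + znorm v) +
        16 * ε / (5 - 8 * ε) * (1 + znorm v)) := by gcongr
    _ = paraRatio ε * (1 + znorm v) := by
      unfold paraRatio
      ring

theorem hasOffDiagonalDecay_paraKernel (hχ : IsCutoff χ) (hε₀ : 0 < ε) (hε₁ : ε < 5 / 8) {ρ : ℝ}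
    (hρ : 0 ≤ ρ) : HasOffDiagonalDecay (d := d) ρ (paraKernel χ ε) := by
  refine hasOffDiagonalDecay_of_support one_pos (paraRatio_pos hε₀ hε₁) hρ
    (norm_paraKernel_le_one hχ ε) fun v w h => ?_
  have hvw := one_add_znorm_le_of_paraKernel_ne_zero hχ hε₀ hε₁ h
  have hwv := one_add_znorm_le_of_paraKernel_ne_zero hχ hε₀ hε₁ (paraKernel_comm χ ε v w ▸ h)
  rcases le_total (znorm v) (znorm w) with hle | hle
  · rwa [max_eq_right hle, min_eq_left hle]
  · rwa [max_eq_left hle, min_eq_right hle]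

/-- The Fourier coefficients of the remainder `ℛ(f,g) = fg - T_f g - T_g f`. -/
def paraRem (χ : ℝ → ℝ) (ε : ℝ) (f g : Fn d) : Seq d := fun ξ =>
  fCoeff (fun x => f x * g x) ξ
    - paraC χ ε (fun x _ => f x) (fCoeff g) ξ
    - paraC χ ε (fun x _ => g x) (fCoeff f) ξ

theorem paraRem_eq_bilinMul (hχ : IsCutoff χ) (ε : ℝ) {s t : ℝ} (hs : (d : ℝ) / 2 < s)
    (ht : (d : ℝ) / 2 < t) {f g : Fn d} (hf : InHs s f) (hg : InHs t g) :
    paraRem χ ε f g = bilinMul (paraKernel χ ε) (fCoeff f) (fCoeff g) := by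
  have hf₁ := hf.summable_norm_fCoeff hs
  have hg₁ := hg.summable_norm_fCoeff ht
  set T : Zd d → Zd d → ℂ := fun v w => paraCutoff χ ε v w
  set T' : Zd d → Zd d → ℂ := fun v w => paraCutoff χ ε w v
  have hone (v w : Zd d) : ‖(1 : Zd d → Zd d → ℂ) v w‖ ≤ 1 := norm_one.le
  have hT (v w : Zd d) : ‖T v w‖ ≤ 1 := norm_paraCutoff_le_one hχ ε v w
  have hT' (v w : Zd d) : ‖T' v w‖ ≤ 1 := norm_paraCutoff_le_one hχ ε w v
  have hprod : fCoeff (fun x => f x * g x) = bilinMul 1 (fCoeff f) (fCoeff g) :=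
    fCoeff_mul_eq_bilinMul_one (integrableOn_box (hf.hasFourierSeries.continuous hf₁)) hg₁
      hg.hasFourierSeries
  have hkernel : paraKernel χ ε = 1 - T - T' := by
    funext v w
    simp only [paraKernel, T, T', Pi.sub_apply, Pi.one_apply, Complex.ofReal_sub,
      Complex.ofReal_one]
  calc paraRem χ ε f g
      = bilinMul 1 (fCoeff f) (fCoeff g) - bilinMul T (fCoeff f) (fCoeff g)
          - bilinMul T' (fCoeff f) (fCoeff g) := by
        rw [← hprod, ← paraC_eq_bilinMul, bilinMul_swap T', ← paraC_eq_bilinMul]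
        rfl
    _ = bilinMul (1 - T - T') (fCoeff f) (fCoeff g) := by
        rw [← bilinMul_sub hone hT hf₁ hg₁, ← bilinMul_sub (A := 2) (fun v w => ?_) hT' hf₁ hg₁]
        exact (norm_sub_le _ _).trans (by linarith [hone v w, hT v w])
    _ = bilinMul (paraKernel χ ε) (fCoeff f) (fCoeff g) := by rw [hkernel]

end Paraproduct

theorem statement_8_general {χ : ℝ → ℝ} (hχ : IsCutoff χ) {ε : ℝ} (hε₀ : 0 < ε)
    (hε₁ : ε < 5 / 8) :
    ∃ a : Zd d → Zd d → ℂ,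
      (∀ ρ, 0 ≤ ρ → HasOffDiagonalDecay ρ a) ∧
      (∀ s t, (d : ℝ) / 2 < s → (d : ℝ) / 2 < t → ∀ f g : Fn d, InHs s f → InHs t g →
        paraRem χ ε f g = bilinMul a (fCoeff f) (fCoeff g)) ∧
      (∀ s t ρ, (d : ℝ) / 2 < s → 0 ≤ ρ → ρ < t - (d : ℝ) / 2 →
        ∃ C > (0 : ℝ), ∀ f g : Fn d, InHs s f → InHs t g →
          InHsSeq (s + ρ) (paraRem χ ε f g) ∧
            hsNorm (s + ρ) (paraRem χ ε f g) ≤ C * sobNorm s f * sobNorm t g) := by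
  refine ⟨paraKernel χ ε, fun ρ hρ => hasOffDiagonalDecay_paraKernel hχ hε₀ hε₁ hρ,
    fun s t hs ht f g => paraRem_eq_bilinMul hχ ε hs ht, fun s t ρ hs hρ hρt => ?_⟩
  have hs₀ : 0 ≤ s := le_trans (by positivity) hs.le
  obtain ⟨C, hC, hbound⟩ :=
    (hasOffDiagonalDecay_paraKernel (d := d) hχ hε₀ hε₁ (add_nonneg hs₀ hρ)
      ).exists_hsNorm_bilinMul_le (t := t) hs₀ (by linarith) (by linarith)
  refine ⟨C, hC, fun f g hf hg => ?_⟩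
  rw [paraRem_eq_bilinMul hχ ε hs (by linarith) hf hg]
  exact hbound _ _ hf.2.1 hg.2.1

/-- Lemma 2.6, paraproduct: `fg = T_f g + T_g f + ℛ(f,g)`, where the
remainder has a kernel `a` with off-diagonal decay of any order `ρ ≥ 0`, and for
`0 ≤ ρ ≤ s - s₀` one has `‖ℛ(f,g)‖_{H^{s+ρ}} ≤ C ‖f‖_{H^s} ‖g‖_{H^s}`. -/
theorem statement_8 (d : ℕ) (hd : 1 ≤ d) (s₀ : ℝ) (hs₀ : (d : ℝ) / 2 < s₀)
    (χ : ℝ → ℝ) (hχ : IsCutoff χ) (ε : ℝ) (hε₀ : 0 < ε) (hε₁ : ε < 1 / 4)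
    (s : ℝ) (hs : s₀ ≤ s) :
    ∃ a : Zd d → Zd d → ℂ,
      (∀ ρ : ℝ, 0 ≤ ρ → ∃ Cρ > (0 : ℝ), ∀ v w : Zd d,
        ‖a v w‖ ≤ Cρ * (1 + min (znorm v) (znorm w)) ^ ρ
            / (1 + max (znorm v) (znorm w)) ^ ρ) ∧
      (∀ f g : Fn d, InHs s f → InHs s g → ∀ ξ : Zd d,
        fCoeff (fun x => f x * g x) ξ
            - paraC χ ε (fun x _ => f x) (fCoeff g) ξ
            - paraC χ ε (fun x _ => g x) (fCoeff f) ξ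
          = (((2 * π : ℝ) ^ (-(d : ℝ) / 2) : ℝ) : ℂ) *
              ∑' η : Zd d, a (ξ - η) η * fCoeff f (ξ - η) * fCoeff g η) ∧
      (∀ ρ : ℝ, 0 ≤ ρ → ρ ≤ s - s₀ → ∃ C > (0 : ℝ), ∀ f g : Fn d,
        InHs s f → InHs s g →
        hsNorm (s + ρ)
            (fun ξ => fCoeff (fun x => f x * g x) ξ
              - paraC χ ε (fun x _ => f x) (fCoeff g) ξ
              - paraC χ ε (fun x _ => g x) (fCoeff f) ξ)
          ≤ C * sobNorm s f * sobNorm s g) := by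
  have hds : (d : ℝ) / 2 < s := hs₀.trans_le hs
  obtain ⟨a, hdecay, hrem, hbound⟩ := statement_8_general (d := d) hχ hε₀ (by linarith)
  refine ⟨a, hdecay, fun f g hf hg => congrFun (hrem s s hds hds f g hf hg), fun ρ hρ hρs => ?_⟩
  obtain ⟨C, hC, hle⟩ := hbound s s ρ hds hρ (by linarith)
  exact ⟨C, hC, fun f g hf hg => (hle f g hf hg).2⟩

end QLNLS
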